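/- arXiv:1504.02374 — 3 statements merged into one kernel-verified Lean document; each statement's English description precedes it below -/
import Mathlib

section
/- Let (Ω, P) be a probability space, let k ≥ 2 be an integer, β̂ > 0, and let X : Ω → ℝ have the Gamma distribution with integer shape k and scale β̂. Let Y : Ω → ℝ be independent of X, with Y ≥ 0 almost surely, integrable, and E[Y] = m. Let α > 0, p > 0 and C ≥ 0 be real constants. Then the random variable ω ↦ (α²·p·C·X(ω) + p·Y(ω) + 1)/(α²·p·X(ω)) is integrable and its expectation equals C + (m + 1/p)/((k−1)·α²·β̂). -/
open MeasureTheory ProbabilityTheory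

lemma gammaPDFReal_integral_one {a r : ℝ} (ha : 0 < a) (hr : 0 < r) :
    Integrable (gammaPDFReal a r) ∧ ∫ x, gammaPDFReal a r x = 1 := by
  have h1 := lintegral_gammaPDF_eq_one ha hr
  unfold gammaPDF at h1
  have hnn : 0 ≤ᵐ[volume] gammaPDFReal a r :=
    Filter.Eventually.of_forall (gammaPDFReal_nonneg ha hr)
  have hms := (stronglyMeasurable_gammaPDFReal a r).aestronglyMeasurable (μ := volume)
  refine ⟨⟨hms, ?_⟩, ?_⟩
  · rw [hasFiniteIntegral_iff_ofReal hnn, h1]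
    simp
  · rw [integral_eq_lintegral_of_nonneg_ae hnn hms, h1]
    simp

lemma gammaPDFReal_mul_inv {a r : ℝ} (ha : 1 < a) (hr : 0 < r) {x : ℝ} (hx : x ≠ 0) :
    gammaPDFReal a r x * x⁻¹ = (r / (a - 1)) * gammaPDFReal (a - 1) r x := by
  unfold gammaPDFReal
  split_ifs with h
  · have hx' : 0 < x := lt_of_le_of_ne h (Ne.symm hx)
    have hG : Real.Gamma a = (a - 1) * Real.Gamma (a - 1) := by
      have := Real.Gamma_add_one (s := a - 1) (by linarith)
      simpa using this
    have hG0 : Real.Gamma (a - 1) ≠ 0 := (Real.Gamma_pos_of_pos (by linarith)).ne'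
    have ha0 : a - 1 ≠ 0 := by linarith
    have e1 : r ^ a = r ^ (a - 1) * r := by
      rw [Real.rpow_sub_one hr.ne']; field_simp
    rw [hG, e1, Real.rpow_sub_one hx'.ne' (a - 1)]
    field_simp
  · simp

lemma gammaMeasure_inv {a r : ℝ} (ha : 1 < a) (hr : 0 < r) :
    Integrable (fun x : ℝ => x⁻¹) (gammaMeasure a r) ∧
      ∫ x, x⁻¹ ∂(gammaMeasure a r) = r / (a - 1) := by
  obtain ⟨hi, he⟩ := gammaPDFReal_integral_one (a := a - 1) (by linarith) hr
  have hm : Measurable (gammaPDF a r) := (measurable_gammaPDFReal a r).ennreal_ofReal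
  have hlt : ∀ᵐ x ∂(volume : Measure ℝ), gammaPDF a r x < ⊤ :=
    Filter.Eventually.of_forall fun x => ENNReal.ofReal_lt_top
  have hae : (fun x => (gammaPDF a r x).toReal • x⁻¹) =ᵐ[volume]
      fun x => (r / (a - 1)) * gammaPDFReal (a - 1) r x := by
    filter_upwards [Measure.ae_ne volume (0 : ℝ)] with x hx
    rw [← gammaPDFReal_mul_inv ha hr hx, gammaPDF,
      ENNReal.toReal_ofReal (gammaPDFReal_nonneg (by linarith) hr x), smul_eq_mul]
  unfold gammaMeasure
  constructor
  · rw [integrable_withDensity_iff_integrable_smul' hm hlt]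
    exact (hi.const_mul _).congr hae.symm
  · rw [integral_withDensity_eq_integral_toReal_smul hm hlt, integral_congr_ae hae,
      integral_const_mul, he, mul_one]

/-- If X has the Gamma distribution with integer shape k ≥ 2 and scale β̂ > 0,
Y is independent of X, Y ≥ 0 a.s., Y is integrable with E[Y] = m, and α, p > 0, C ≥ 0,
then ω ↦ (α²·p·C·X(ω) + p·Y(ω) + 1)/(α²·p·X(ω)) is integrable with expectation
C + (m + 1/p)/((k−1)·α²·β̂). -/
theorem inverse_sinr_expectation {Ω : Type*} [MeasurableSpace Ω] (P : Measure Ω)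
    [IsProbabilityMeasure P] (k : ℕ) (hk : 2 ≤ k) (βh : ℝ) (hβ : 0 < βh)
    (X Y : Ω → ℝ) (hXm : Measurable X) (hYm : Measurable Y)
    (hX : Measure.map X P = gammaMeasure k (1 / βh))
    (hindep : IndepFun X Y P)
    (hYpos : ∀ᵐ ω ∂P, 0 ≤ Y ω) (hYint : Integrable Y P) (m : ℝ) (hm : ∫ ω, Y ω ∂P = m)
    (α p C : ℝ) (hα : 0 < α) (hp : 0 < p) (hC : 0 ≤ C) :
    Integrable (fun ω => (α ^ 2 * p * C * X ω + p * Y ω + 1) / (α ^ 2 * p * X ω)) P ∧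
    ∫ ω, (α ^ 2 * p * C * X ω + p * Y ω + 1) / (α ^ 2 * p * X ω) ∂P
      = C + (m + 1 / p) / (((k : ℝ) - 1) * α ^ 2 * βh) := by
  have hk1 : (1 : ℝ) < k := by exact_mod_cast (by omega : 1 < k)
  obtain ⟨hi, he⟩ := gammaMeasure_inv hk1 (one_div_pos.mpr hβ)
  have hX0 : ∀ᵐ ω ∂P, X ω ≠ 0 := by
    refine ae_of_ae_map hXm.aemeasurable (p := fun x => x ≠ 0) ?_
    rw [hX]
    exact (withDensity_absolutelyContinuous _ _).ae_le (Measure.ae_ne volume (0 : ℝ))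
  rw [← hX] at hi he
  have hi' : Integrable (fun ω => (X ω)⁻¹) P := hi.comp_measurable hXm
  rw [integral_map hXm.aemeasurable hi.aestronglyMeasurable] at he
  have hind : IndepFun (fun ω => (X ω)⁻¹) Y P := hindep.comp measurable_inv measurable_id
  have hXY : Integrable (fun ω => (X ω)⁻¹ * Y ω) P := hind.integrable_mul hi' hYint
  have hXYe : ∫ ω, (X ω)⁻¹ * Y ω ∂P = (∫ ω, (X ω)⁻¹ ∂P) * ∫ ω, Y ω ∂P :=
    hind.integral_mul_eq_mul_integral hi'.aestronglyMeasurable hYint.aestronglyMeasurable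
  have hae : (fun ω => (α ^ 2 * p * C * X ω + p * Y ω + 1) / (α ^ 2 * p * X ω)) =ᵐ[P]
      fun ω => (C + (1 / α ^ 2) * ((X ω)⁻¹ * Y ω)) + (1 / (α ^ 2 * p)) * (X ω)⁻¹ := by
    filter_upwards [hX0] with ω hω
    field_simp
  have hA : Integrable (fun ω => C + (1 / α ^ 2) * ((X ω)⁻¹ * Y ω)) P :=
    (integrable_const C).add (hXY.const_mul _)
  refine ⟨(hA.add (hi'.const_mul _)).congr hae.symm, ?_⟩
  rw [integral_congr_ae hae, integral_add hA (hi'.const_mul _),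
    integral_add (integrable_const C) (hXY.const_mul _), integral_const_mul,
    integral_const_mul, hXYe, he, hm]
  have hk0 : (k : ℝ) - 1 ≠ 0 := by linarith
  simp only [integral_const, probReal_univ, one_smul]
  field_simp
  try ring
end

section
/- Let (Ω, P) be a probability space, let N > K ≥ 1 be integers, β̂ > 0, and let X : Ω → ℝ have the Gamma distribution with integer shape N−K+1 and scale β̂. Let Y : Ω → ℝ be independent of X, with Y ≥ 0 almost surely, integrable, and E[Y] = m. Let α > 0, p > 0 and C > 0 be real constants, and set γ = α²·p·X/(α²·p·C·X + p·Y + 1). Then E[log₂(1 + γ)] ≥ log₂( 1 + 1/( C + (m + 1/p)/((N−K)·α²·β̂) ) ). -/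
open MeasureTheory ProbabilityTheory

lemma gamma_ae_pos (a r : ℝ) : ∀ᵐ x ∂(gammaMeasure a r), 0 < x := by
  unfold gammaMeasure
  have hmeas : Measurable (gammaPDF a r) := (measurable_gammaPDFReal a r).ennreal_ofReal
  rw [ae_withDensity_iff hmeas]
  filter_upwards [Measure.ae_ne volume (0 : ℝ)] with x hx h
  by_contra hc
  exact h (gammaPDF_of_neg (lt_of_le_of_ne (not_lt.mp hc) hx))

lemma gamma_lint_inv (n r : ℝ) (hn : 0 < n) (hr : 0 < r) :
    ∫⁻ x, ENNReal.ofReal x⁻¹ ∂(gammaMeasure (n + 1) r) = ENNReal.ofReal (r / n) := by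
  have hmeas : Measurable (gammaPDF (n + 1) r) := (measurable_gammaPDFReal (n + 1) r).ennreal_ofReal
  have hmeas' : Measurable (gammaPDF n r) := (measurable_gammaPDFReal n r).ennreal_ofReal
  unfold gammaMeasure
  rw [lintegral_withDensity_eq_lintegral_mul _ hmeas (by fun_prop)]
  have : ∫⁻ x, (gammaPDF (n + 1) r * fun x => ENNReal.ofReal x⁻¹) x
      = ∫⁻ x, ENNReal.ofReal (r / n) * gammaPDF n r x := by
    apply lintegral_congr_ae
    filter_upwards [Measure.ae_ne volume (0 : ℝ)] with x hx
    rcases lt_or_gt_of_ne hx with h | h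
    · simp [gammaPDF_of_neg h]
    · simp only [Pi.mul_apply]
      rw [gammaPDF_of_nonneg h.le, gammaPDF_of_nonneg h.le,
        ← ENNReal.ofReal_mul' (by positivity), ← ENNReal.ofReal_mul (by positivity)]
      congr 1
      rw [Real.Gamma_add_one hn.ne', Real.rpow_add_one hr.ne',
        show n + 1 - 1 = (n - 1) + 1 by ring, Real.rpow_add_one h.ne']
      have := (Real.Gamma_pos_of_pos hn).ne'
      field_simp
  rw [this, lintegral_const_mul _ hmeas', lintegral_gammaPDF_eq_one hn hr, mul_one]

lemma tangent (u v : ℝ) (hu : 0 < u) (hv : 0 < v) :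
    Real.log (1 + 1 / v) - (u - v) * (1 / (v * (v + 1))) ≤ Real.log (1 + 1 / u) := by
  have h1 := Real.log_le_sub_one_of_pos (x := (1 + 1 / v) / (1 + 1 / u)) (by positivity)
  rw [Real.log_div (by positivity) (by positivity)] at h1
  have h2 : (u - v) * (1 / (v * (v + 1))) - ((1 + 1 / v) / (1 + 1 / u) - 1)
      = (u - v) ^ 2 / (v * (v + 1) * (u + 1)) := by
    field_simp
    ring
  have h3 : 0 ≤ (u - v) ^ 2 / (v * (v + 1) * (u + 1)) := by positivity
  linarith

/-- Proposition 2 of the paper: lower bound on the uplink ergodic achievable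
rate. If X has the Gamma distribution with integer shape N−K+1 and scale β̂ > 0, Y is
independent of X, Y ≥ 0 a.s., integrable with E[Y] = m, and α, p, C > 0, then
E[log₂(1 + γ)] ≥ log₂(1 + 1/(C + (m + 1/p)/((N−K)·α²·β̂))) where
γ = α²·p·X/(α²·p·C·X + p·Y + 1). -/
theorem rate_lower_bound {Ω : Type*} [MeasurableSpace Ω] (P : Measure Ω)
    [IsProbabilityMeasure P] (N K : ℕ) (hK : 1 ≤ K) (hNK : K < N) (βh : ℝ) (hβ : 0 < βh)
    (X Y : Ω → ℝ) (hXm : Measurable X) (hYm : Measurable Y)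
    (hX : Measure.map X P = gammaMeasure (N - K + 1 : ℕ) (1 / βh))
    (hindep : IndepFun X Y P)
    (hYpos : ∀ᵐ ω ∂P, 0 ≤ Y ω) (hYint : Integrable Y P) (m : ℝ) (hm : ∫ ω, Y ω ∂P = m)
    (α p C : ℝ) (hα : 0 < α) (hp : 0 < p) (hC : 0 < C) :
    ∫ ω, Real.logb 2
        (1 + α ^ 2 * p * X ω / (α ^ 2 * p * C * X ω + p * Y ω + 1)) ∂P
      ≥ Real.logb 2
        (1 + 1 / (C + (m + 1 / p) / (((N : ℝ) - K) * α ^ 2 * βh))) := by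
  have hn : (0 : ℝ) < (N : ℝ) - K := sub_pos.mpr (by exact_mod_cast hNK)
  have hr : 0 < 1 / βh := by positivity
  have hcast : ((N - K + 1 : ℕ) : ℝ) = ((N : ℝ) - K) + 1 := by
    push_cast [Nat.cast_sub hNK.le]; ring
  rw [hcast] at hX
  set n : ℝ := (N : ℝ) - K with hndef
  have hXpos : ∀ᵐ ω ∂P, 0 < X ω := by
    have h := gamma_ae_pos (n + 1) (1 / βh)
    rw [← hX] at h
    exact ae_of_ae_map hXm.aemeasurable h
  have hlint : ∫⁻ ω, ENNReal.ofReal (X ω)⁻¹ ∂P = ENNReal.ofReal (1 / βh / n) := by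
    rw [← gamma_lint_inv n (1 / βh) hn hr, ← hX, lintegral_map (by fun_prop) hXm]
  have hinvnn : 0 ≤ᵐ[P] fun ω => (X ω)⁻¹ := by
    filter_upwards [hXpos] with ω h
    exact (inv_pos.mpr h).le
  have hinvm : Measurable fun ω => (X ω)⁻¹ := hXm.inv
  have hinvint : Integrable (fun ω => (X ω)⁻¹) P := by
    refine ⟨hinvm.aestronglyMeasurable, ?_⟩
    rw [hasFiniteIntegral_iff_ofReal hinvnn, hlint]
    exact ENNReal.ofReal_lt_top
  have hinvE : ∫ ω, (X ω)⁻¹ ∂P = 1 / βh / n := by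
    rw [integral_eq_lintegral_of_nonneg_ae hinvnn hinvm.aestronglyMeasurable, hlint,
      ENNReal.toReal_ofReal (by positivity)]
  have hind2 : IndepFun (fun ω => (X ω)⁻¹) (fun ω => Y ω + 1 / p) P :=
    hindep.comp (φ := fun x : ℝ => x⁻¹) (ψ := fun y : ℝ => y + 1 / p)
      (by fun_prop) (by fun_prop)
  have hYint2 : Integrable (fun ω => Y ω + 1 / p) P := hYint.add (integrable_const _)
  have hprod : Integrable (fun ω => (X ω)⁻¹ * (Y ω + 1 / p)) P :=
    hind2.integrable_mul hinvint hYint2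
  have hprodE : ∫ ω, (X ω)⁻¹ * (Y ω + 1 / p) ∂P = 1 / βh / n * (m + 1 / p) := by
    rw [hind2.integral_fun_mul_eq_mul_integral hinvint.aestronglyMeasurable
      hYint2.aestronglyMeasurable, hinvE, integral_add hYint (integrable_const _), hm]
    simp
  have hm0 : 0 ≤ m := hm ▸ integral_nonneg_of_ae hYpos
  set v : ℝ := C + (m + 1 / p) / (n * α ^ 2 * βh) with hv
  have hvpos : 0 < v := by positivity
  have hl2 : 0 < Real.log 2 := Real.log_pos (by norm_num)
  have hrw : ∀ᵐ ω ∂P, 0 < C + (X ω)⁻¹ * (Y ω + 1 / p) / α ^ 2 ∧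
      C ≤ C + (X ω)⁻¹ * (Y ω + 1 / p) / α ^ 2 ∧
      α ^ 2 * p * X ω / (α ^ 2 * p * C * X ω + p * Y ω + 1)
        = 1 / (C + (X ω)⁻¹ * (Y ω + 1 / p) / α ^ 2) := by
    filter_upwards [hXpos, hYpos] with ω hx hy
    have hz : 0 ≤ (X ω)⁻¹ * (Y ω + 1 / p) / α ^ 2 := by positivity
    refine ⟨by positivity, by linarith, ?_⟩
    have h1 : 0 < α ^ 2 * p * C * X ω + p * Y ω + 1 := by positivity
    have h2 : C + (X ω)⁻¹ * (Y ω + 1 / p) / α ^ 2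
        = (α ^ 2 * p * C * X ω + p * Y ω + 1) / (α ^ 2 * p * X ω) := by
      field_simp
      try ring
    rw [h2, one_div_div]
  have hgint : Integrable (fun ω => Real.logb 2
      (1 + α ^ 2 * p * X ω / (α ^ 2 * p * C * X ω + p * Y ω + 1))) P := by
    refine Integrable.of_bound (C := Real.logb 2 (1 + 1 / C)) ?_ ?_
    · apply Measurable.aestronglyMeasurable
      unfold Real.logb
      fun_prop
    · filter_upwards [hrw] with ω h
      obtain ⟨h0, h1, h2⟩ := h
      rw [h2, Real.norm_of_nonneg]
      · apply Real.logb_le_logb_of_le (by norm_num) (by positivity)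
        gcongr
      · apply Real.logb_nonneg (by norm_num)
        have : 0 < 1 / (C + (X ω)⁻¹ * (Y ω + 1 / p) / α ^ 2) := by positivity
        linarith
  have hlint' : Integrable (fun ω => (C + (X ω)⁻¹ * (Y ω + 1 / p) / α ^ 2 - v)
      * (1 / (v * (v + 1)))) P :=
    (((integrable_const C).add (hprod.div_const _)).sub (integrable_const v)).mul_const _
  have hE0 : ∫ ω, (C + (X ω)⁻¹ * (Y ω + 1 / p) / α ^ 2 - v) * (1 / (v * (v + 1))) ∂P = 0 := by
    have hsum : Integrable (fun ω => C + (X ω)⁻¹ * (Y ω + 1 / p) / α ^ 2) P :=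
      (integrable_const C).add (hprod.div_const _)
    rw [integral_mul_const, integral_sub hsum
      (integrable_const v), integral_add (integrable_const C) (hprod.div_const _),
      integral_div, hprodE]
    simp only [integral_const, probReal_univ, one_smul]
    have : C + 1 / βh / n * (m + 1 / p) / α ^ 2 - v = 0 := by
      rw [hv]
      field_simp
      try ring
    rw [this, zero_mul]
  have key : ∫ ω, (Real.log (1 + 1 / v) - (C + (X ω)⁻¹ * (Y ω + 1 / p) / α ^ 2 - v)
      * (1 / (v * (v + 1)))) / Real.log 2 ∂P ≤ ∫ ω, Real.logb 2
        (1 + α ^ 2 * p * X ω / (α ^ 2 * p * C * X ω + p * Y ω + 1)) ∂P := by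
    apply integral_mono_ae (((integrable_const _).sub hlint').div_const _) hgint
    filter_upwards [hrw] with ω h
    obtain ⟨h0, h1, h2⟩ := h
    simp only [h2, Real.logb]
    exact div_le_div_of_nonneg_right (tangent _ _ h0 hvpos) hl2.le
  rw [integral_div, integral_sub (integrable_const _) hlint', hE0] at key
  simpa [Real.logb] using key
end

section
/- Let (Ω, P) be a probability space, let N > K ≥ 1 be integers, β̂ > 0, and let X : Ω → ℝ have the Gamma distribution with integer shape N−K+1 and scale β̂. Let Y : Ω → ℝ be independent of X, with Y ≥ 0 almost surely and integrable. Let α > 0 and C ≥ 0, and define R(p) = E[ log₂( 1 + α²·p·X/(α²·p·C·X + p·Y + 1) ) ] for p ≥ 0. Then R has right derivative at p = 0 (derivative within [0, ∞)) equal to α²·(N−K+1)·β̂ / ln 2. -/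
open MeasureTheory ProbabilityTheory

lemma gamma_mean_aux (a r : ℝ) (ha : 0 < a) (hr : 0 < r) :
    ∫ x, x ∂(gammaMeasure a r) = a / r := by
  unfold gammaMeasure
  rw [integral_withDensity_eq_integral_toReal_smul (f := gammaPDF a r)
    ((measurable_gammaPDFReal a r).ennreal_ofReal)
    (Filter.Eventually.of_forall fun x => ENNReal.ofReal_lt_top)]
  have h1 : ∀ x : ℝ, (gammaPDF a r x).toReal • x =
      Set.indicator (Set.Ioi 0)
        (fun x => r ^ a / Real.Gamma a * (x ^ ((a + 1) - 1) * Real.exp (-(r * x)))) x := by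
    intro x
    rw [gammaPDF, ENNReal.toReal_ofReal (gammaPDFReal_nonneg ha hr x)]
    unfold gammaPDFReal
    rcases lt_trichotomy x 0 with hx | hx | hx
    · simp [hx.not_ge, hx.le]
    · simp [hx]
    · simp only [hx.le, if_true, Set.mem_Ioi, hx, Set.indicator_of_mem, smul_eq_mul]
      have : x ^ (a + 1 - 1) = x ^ (a - 1) * x := by
        rw [← Real.rpow_add_one hx.ne']; ring_nf
      rw [this]; ring
  simp_rw [h1]
  rw [integral_indicator measurableSet_Ioi, integral_const_mul,
    Real.integral_rpow_mul_exp_neg_mul_Ioi (by positivity) hr, Real.Gamma_add_one ha.ne',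
    Real.rpow_add_one (by positivity), Real.div_rpow zero_le_one hr.le, Real.one_rpow]
  have h2 := (Real.Gamma_pos_of_pos ha).ne'
  have h3 := (Real.rpow_pos_of_pos hr a).ne'
  field_simp

lemma gamma_nonneg_aux (a r : ℝ) : ∀ᵐ x ∂(gammaMeasure a r), 0 ≤ x := by
  unfold gammaMeasure
  rw [ae_withDensity_iff (f := gammaPDF a r) ((measurable_gammaPDFReal a r).ennreal_ofReal)]
  refine Filter.Eventually.of_forall fun x hx => ?_
  by_contra h
  exact hx (gammaPDF_of_neg (not_le.mp h))

/-- Let X have the Gamma distribution with integer shape N−K+1 and scale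
β̂ > 0 and let Y ≥ 0 a.s. be integrable and independent of X. With α > 0 and C ≥ 0,
the ergodic rate R(p) = E[log₂(1 + α²·p·X/(α²·p·C·X + p·Y + 1))] has right derivative
α²·(N−K+1)·β̂/ln 2 at p = 0. -/
theorem rate_right_deriv_at_zero {Ω : Type*} [MeasurableSpace Ω] (P : Measure Ω)
    [IsProbabilityMeasure P] (N K : ℕ) (hK : 1 ≤ K) (hNK : K < N) (βh : ℝ) (hβ : 0 < βh)
    (X Y : Ω → ℝ) (hXm : Measurable X) (hYm : Measurable Y)
    (hX : Measure.map X P = gammaMeasure (N - K + 1 : ℕ) (1 / βh))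
    (hindep : IndepFun X Y P)
    (hYpos : ∀ᵐ ω ∂P, 0 ≤ Y ω) (hYint : Integrable Y P)
    (α C : ℝ) (hα : 0 < α) (hC : 0 ≤ C) :
    HasDerivWithinAt
      (fun p : ℝ => ∫ ω, Real.logb 2
        (1 + α ^ 2 * p * X ω / (α ^ 2 * p * C * X ω + p * Y ω + 1)) ∂P)
      (α ^ 2 * ((N : ℝ) - K + 1) * βh / Real.log 2) (Set.Ici 0) 0 := by
  have hl2 : 0 < Real.log 2 := Real.log_pos (by norm_num)
  have hcast : ((N - K + 1 : ℕ) : ℝ) = (N : ℝ) - K + 1 := by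
    push_cast [Nat.cast_sub hNK.le]; ring
  have hmean : ∫ ω, X ω ∂P = ((N : ℝ) - K + 1) * βh := by
    have h := integral_map (μ := P) hXm.aemeasurable (f := fun x : ℝ => x)
      measurable_id.aestronglyMeasurable
    rw [← h, hX, gamma_mean_aux _ _ (by positivity) (by positivity), hcast]
    field_simp
  have hKN : (K : ℝ) < N := by exact_mod_cast hNK
  have hXint : Integrable X P := .of_integral_ne_zero (by
    rw [hmean]
    have : 0 < (N : ℝ) - K + 1 := by linarith
    positivity)
  have hXpos : ∀ᵐ ω ∂P, 0 ≤ X ω := by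
    refine ae_of_ae_map hXm.aemeasurable (p := fun x : ℝ => 0 ≤ x) ?_
    rw [hX]; exact gamma_nonneg_aux _ _
  rw [hasDerivWithinAt_iff_tendsto_slope]
  have hval : α ^ 2 * ((N : ℝ) - K + 1) * βh / Real.log 2
      = ∫ ω, α ^ 2 * X ω / Real.log 2 ∂P := by
    rw [integral_div, integral_const_mul, hmean]; ring
  have hs : slope (fun p : ℝ => ∫ ω, Real.logb 2
        (1 + α ^ 2 * p * X ω / (α ^ 2 * p * C * X ω + p * Y ω + 1)) ∂P) 0 =
      fun p => ∫ ω, p⁻¹ * Real.logb 2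
        (1 + α ^ 2 * p * X ω / (α ^ 2 * p * C * X ω + p * Y ω + 1)) ∂P := by
    funext p
    rw [integral_const_mul]
    simp [slope_def_field, div_eq_inv_mul]
  rw [hval, hs]
  refine tendsto_integral_filter_of_dominated_convergence
    (fun ω => α ^ 2 * X ω / Real.log 2) ?_ ?_ ((hXint.const_mul _).div_const _) ?_
  · refine Filter.Eventually.of_forall fun p => Measurable.aestronglyMeasurable ?_
    unfold Real.logb
    fun_prop
  · filter_upwards [self_mem_nhdsWithin] with p hp
    have hp0 : 0 < p := lt_of_le_of_ne hp.1 (fun h => hp.2 h.symm)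
    filter_upwards [hXpos, hYpos] with ω hx hy
    set u := α ^ 2 * p * X ω / (α ^ 2 * p * C * X ω + p * Y ω + 1) with hu
    have hu0 : 0 ≤ u := by positivity
    have hu1 : u ≤ α ^ 2 * p * X ω := by
      apply div_le_self (by positivity)
      have : 0 ≤ α ^ 2 * p * C * X ω + p * Y ω := by positivity
      linarith
    have hlog0 : 0 ≤ Real.log (1 + u) := Real.log_nonneg (by linarith)
    have hlog1 : Real.log (1 + u) ≤ u := by
      have := Real.log_le_sub_one_of_pos (show 0 < 1 + u by linarith)
      linarith
    unfold Real.logb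
    rw [Real.norm_of_nonneg (by positivity), ← mul_div_assoc]
    refine div_le_div_of_nonneg_right ?_ hl2.le
    rw [inv_mul_le_iff₀ hp0]
    linarith
  · filter_upwards with ω
    have hd : HasDerivAt (fun p : ℝ => Real.logb 2
        (1 + α ^ 2 * p * X ω / (α ^ 2 * p * C * X ω + p * Y ω + 1)))
        (α ^ 2 * X ω / Real.log 2) 0 := by
      have hn : HasDerivAt (fun p : ℝ => α ^ 2 * p * X ω) (α ^ 2 * X ω) 0 := by
        simpa using ((hasDerivAt_id (0:ℝ)).const_mul (α ^ 2)).mul_const (X ω)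
      have hD : HasDerivAt (fun p : ℝ => α ^ 2 * p * C * X ω + p * Y ω + 1)
          (α ^ 2 * C * X ω + Y ω) 0 := by
        simpa using ((((hasDerivAt_id (0:ℝ)).const_mul (α ^ 2)).mul_const C).mul_const
          (X ω)).add ((hasDerivAt_id (0:ℝ)).mul_const (Y ω)) |>.add_const 1
      have h := (((hn.div hD (by simp)).const_add 1).log (by simp)).div_const (Real.log 2)
      simpa [Real.logb] using h
    have h := (hasDerivAt_iff_tendsto_slope.mp hd).mono_left
      (nhdsWithin_mono 0 (show Set.Ici (0:ℝ) \ {0} ⊆ {0}ᶜ from fun x hx => hx.2))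
    refine h.congr fun p => ?_
    simp [slope_def_field, div_eq_inv_mul]
end
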